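/- Let R, B, S be finite-valued random variables on a probability space with negative interaction information I(R;B;S) < 0, and let C_RB, C_RS, C_BS be real numbers (causal strengths) satisfying C_RB = I(R;B), C_RS ≥ I(R;S|B), and C_BS ≥ I(B;S|R). If C_RB < |I(R;B;S)| (the root-to-bridge influence is weak), then neither of the other two causal influences is weak: C_RS ≥ |I(R;B;S)| and C_BS ≥ |I(R;B;S)|. -/

import Mathlib

open MeasureTheory

/-- Shannon entropy of a finite-valued random variable `X` under the measure `μ`,
with the convention `0 * log 0 = 0` (note `Real.log 0 = 0` in Mathlib). -/
noncomputable def entropy {Ω α : Type*} [MeasurableSpace Ω] [Fintype α]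
    (μ : Measure Ω) (X : Ω → α) : ℝ :=
  - ∑ x : α, (μ (X ⁻¹' {x})).toReal * Real.log (μ (X ⁻¹' {x})).toReal

/-- Mutual information `I(X;Y) = H(X) + H(Y) - H(X,Y)` of finite-valued random variables. -/
noncomputable def mutualInfo {Ω α β : Type*} [MeasurableSpace Ω] [Fintype α] [Fintype β]
    (μ : Measure Ω) (X : Ω → α) (Y : Ω → β) : ℝ :=
  entropy μ X + entropy μ Y - entropy μ (fun ω => (X ω, Y ω))

/-- Conditional mutual information
`I(X;Y|Z) = H(X,Z) + H(Y,Z) - H(X,Y,Z) - H(Z)` of finite-valued random variables. -/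
noncomputable def condMutualInfo {Ω α β γ : Type*} [MeasurableSpace Ω]
    [Fintype α] [Fintype β] [Fintype γ]
    (μ : Measure Ω) (X : Ω → α) (Y : Ω → β) (Z : Ω → γ) : ℝ :=
  entropy μ (fun ω => (X ω, Z ω)) + entropy μ (fun ω => (Y ω, Z ω))
    - entropy μ (fun ω => (X ω, Y ω, Z ω)) - entropy μ Z

/-- Interaction information `I(X;Y;Z) = I(X;Y) - I(X;Y|Z)`. -/
noncomputable def interactionInfo {Ω α β γ : Type*} [MeasurableSpace Ω]
    [Fintype α] [Fintype β] [Fintype γ]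
    (μ : Measure Ω) (X : Ω → α) (Y : Ω → β) (Z : Ω → γ) : ℝ :=
  mutualInfo μ X Y - condMutualInfo μ X Y Z

lemma entropy_comp_equiv {Ω α β : Type*} [MeasurableSpace Ω] [Fintype α] [Fintype β]
    (μ : Measure Ω) (X : Ω → α) (e : α ≃ β) :
    entropy μ (fun ω => e (X ω)) = entropy μ X := by
  unfold entropy
  congr 1
  symm
  apply Fintype.sum_equiv e
  intro x
  have h : (fun ω => e (X ω)) ⁻¹' {e x} = X ⁻¹' {x} := by
    ext ω
    simp
  rw [h]

lemma marginal_sum {Ω α β : Type*} [MeasurableSpace Ω]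
    [MeasurableSpace α] [MeasurableSingletonClass α]
    [Fintype β] [MeasurableSpace β] [MeasurableSingletonClass β]
    (μ : Measure Ω) [IsProbabilityMeasure μ] (X : Ω → α) (Y : Ω → β)
    (hX : Measurable X) (hY : Measurable Y) (x : α) :
    ∑ y : β, (μ ((fun ω => (X ω, Y ω)) ⁻¹' {(x, y)})).toReal = (μ (X ⁻¹' {x})).toReal := by
  have hs : ∀ y : β, (fun ω => (X ω, Y ω)) ⁻¹' {(x, y)} = X ⁻¹' {x} ∩ Y ⁻¹' {y} := by
    intro y
    ext ω
    simp
  have hU : X ⁻¹' {x} = ⋃ y : β, X ⁻¹' {x} ∩ Y ⁻¹' {y} := by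
    ext ω
    simp
  have hm : μ (X ⁻¹' {x}) = ∑ y : β, μ (X ⁻¹' {x} ∩ Y ⁻¹' {y}) := by
    conv_lhs => rw [hU]
    rw [measure_iUnion, tsum_fintype]
    · intro y z hyz
      refine Set.disjoint_left.mpr ?_
      rintro ω ⟨_, h1⟩ ⟨_, h2⟩
      exact hyz (h1.symm.trans h2)
    · intro y
      exact (hX (measurableSet_singleton x)).inter (hY (measurableSet_singleton y))
  rw [hm, ENNReal.toReal_sum (fun y _ => measure_ne_top μ _)]
  exact Finset.sum_congr rfl (fun y _ => by rw [hs])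

lemma total_sum {Ω α : Type*} [MeasurableSpace Ω]
    [Fintype α] [MeasurableSpace α] [MeasurableSingletonClass α]
    (μ : Measure Ω) [IsProbabilityMeasure μ] (X : Ω → α) (hX : Measurable X) :
    ∑ x : α, (μ (X ⁻¹' {x})).toReal = 1 := by
  have h := marginal_sum μ (fun _ => ()) X measurable_const hX ()
  have h2 : ∀ x : α, (fun ω => ((), X ω)) ⁻¹' {((), x)} = X ⁻¹' {x} := by
    intro x
    ext ω
    simp
  simpa [h2] using h

lemma mutualInfo_nonneg_aux {Ω α β : Type*} [MeasurableSpace Ω]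
    [Fintype α] [MeasurableSpace α] [MeasurableSingletonClass α]
    [Fintype β] [MeasurableSpace β] [MeasurableSingletonClass β]
    (μ : Measure Ω) [IsProbabilityMeasure μ] (X : Ω → α) (Y : Ω → β)
    (hX : Measurable X) (hY : Measurable Y) : 0 ≤ mutualInfo μ X Y := by
  have ha := marginal_sum μ X Y hX hY
  have hb : ∀ y : β, ∑ x : α, (μ ((fun ω => (X ω, Y ω)) ⁻¹' {(x, y)})).toReal
      = (μ (Y ⁻¹' {y})).toReal := by
    intro y
    rw [← marginal_sum μ Y X hY hX y]
    refine Finset.sum_congr rfl (fun x _ => ?_)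
    congr 2
    ext ω
    simp [and_comm]
  have ta := total_sum μ X hX
  have tb := total_sum μ Y hY
  unfold mutualInfo entropy
  rw [Fintype.sum_prod_type]
  have hp : ∀ x y, 0 ≤ (μ ((fun ω => (X ω, Y ω)) ⁻¹' {(x, y)})).toReal :=
    fun _ _ => ENNReal.toReal_nonneg
  generalize hpd : (fun x y => (μ ((fun ω => (X ω, Y ω)) ⁻¹' {(x, y)})).toReal) = p at *
  have hpd' : ∀ x y, (μ ((fun ω => (X ω, Y ω)) ⁻¹' {(x, y)})).toReal = p x y := by
    intro x y
    rw [← hpd]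
  simp only [hpd'] at *
  simp only [← ha, ← hb] at *
  have key : ∀ x y, p x y - (∑ y', p x y') * (∑ x', p x' y) ≤
      p x y * Real.log (p x y) - p x y * Real.log (∑ y', p x y')
        - p x y * Real.log (∑ x', p x' y) := by
    intro x y
    have hA : p x y ≤ ∑ y', p x y' :=
      Finset.single_le_sum (f := fun y' => p x y') (fun i _ => hp x i) (Finset.mem_univ y)
    have hB : p x y ≤ ∑ x', p x' y :=
      Finset.single_le_sum (f := fun x' => p x' y) (fun i _ => hp i y) (Finset.mem_univ x)
    generalize (∑ y', p x y') = A at *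
    generalize (∑ x', p x' y) = B at *
    rcases (hp x y).eq_or_lt with h0 | h0
    · rw [← h0] at hA hB ⊢
      have := mul_nonneg hA hB
      simp only [zero_mul]
      linarith
    · have hA0 : 0 < A := by linarith
      have hB0 : 0 < B := by linarith
      have hl := Real.log_le_sub_one_of_pos (x := A * B / p x y) (by positivity)
      rw [Real.log_div (by positivity) (by positivity),
        Real.log_mul (by positivity) (by positivity)] at hl
      have h2 := mul_le_mul_of_nonneg_left hl h0.le
      have h3 : p x y * (A * B / p x y - 1) = A * B - p x y := by
        field_simp
      rw [h3] at h2
      linarith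
  have hsum := Finset.sum_le_sum (fun x (_ : x ∈ Finset.univ) =>
    Finset.sum_le_sum (fun y (_ : y ∈ Finset.univ) => key x y))
  simp only [Finset.sum_sub_distrib] at hsum
  have e1 : ∑ x, ∑ y, (∑ y', p x y') * (∑ x', p x' y) = 1 := by
    rw [← Finset.sum_mul_sum, ta, tb, one_mul]
  have e2 : ∑ x, ∑ y, p x y * Real.log (∑ y', p x y')
      = ∑ x, (∑ y', p x y') * Real.log (∑ y', p x y') := by
    simp only [Finset.sum_mul]
  have e3 : ∑ x, ∑ y, p x y * Real.log (∑ x', p x' y)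
      = ∑ y, (∑ x', p x' y) * Real.log (∑ x', p x' y) := by
    rw [Finset.sum_comm]
    simp only [Finset.sum_mul]
  rw [e1, e2, e3, ta] at hsum
  linarith

/-- in a triangle DAG with negative interaction information, if the
root-to-bridge influence is weak, then neither of the other two causal influences
is weak. -/
theorem others_not_weak_of_root_to_bridge_weak {Ω α β γ : Type*} [MeasurableSpace Ω]
    [Fintype α] [MeasurableSpace α] [MeasurableSingletonClass α]
    [Fintype β] [MeasurableSpace β] [MeasurableSingletonClass β]
    [Fintype γ] [MeasurableSpace γ] [MeasurableSingletonClass γ]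
    (μ : MeasureTheory.Measure Ω) [MeasureTheory.IsProbabilityMeasure μ]
    (R : Ω → α) (B : Ω → β) (S : Ω → γ)
    (hR : Measurable R) (hB : Measurable B) (hS : Measurable S)
    (hneg : interactionInfo μ R B S < 0)
    (C_RB C_RS C_BS : ℝ)
    (hRB : C_RB = mutualInfo μ R B)
    (hRS : C_RS ≥ condMutualInfo μ R S B)
    (hBS : C_BS ≥ condMutualInfo μ B S R)
    (hweak : C_RB < |interactionInfo μ R B S|) :
    C_RS ≥ |interactionInfo μ R B S| ∧ C_BS ≥ |interactionInfo μ R B S| := by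
  have hII := abs_of_neg hneg
  have n1 := mutualInfo_nonneg_aux μ R S hR hS
  have n2 := mutualInfo_nonneg_aux μ B S hB hS
  have s1 := entropy_comp_equiv μ (fun ω => (R ω, B ω)) (Equiv.prodComm α β)
  have s2 := entropy_comp_equiv μ (fun ω => (S ω, B ω)) (Equiv.prodComm γ β)
  have s3 := entropy_comp_equiv μ (fun ω => (S ω, R ω)) (Equiv.prodComm γ α)
  have s4 := entropy_comp_equiv μ (fun ω => (R ω, B ω, S ω))
    ((Equiv.refl α).prodCongr (Equiv.prodComm β γ))
  have s5 := entropy_comp_equiv μ (fun ω => (R ω, B ω, S ω))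
    ((Equiv.prodComm α (β × γ)).trans (Equiv.prodAssoc β γ α))
  simp only [Equiv.prodComm_apply, Prod.swap_prod_mk, Equiv.prodCongr_apply, Prod.map_apply,
    Equiv.refl_apply, Equiv.trans_apply, Equiv.prodAssoc_apply, Equiv.coe_refl, id] at s1 s2 s3 s4 s5
  rw [hII]
  unfold interactionInfo condMutualInfo mutualInfo at *
  constructor <;> linarith
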